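/- Let c₁, c₂, c₃ ∈ 𝔽_p and N(c₁,c₂,c₃) = #{(a,b) ∈ 𝔽_q × 𝔽_q : Tr(a²) = c₁, Tr(b²) = c₂ and Tr(ab) = c₃}. If m is even, then (as complex numbers): N = p^{2m−3} + p^{m−3}(p−1)(2p−1) + p^{m−3}(p²−1)G + p^{−3}(p−1)³G² if c₁ = c₂ = c₃ = 0; N = p^{2m−3} + p^{m−3}(p−1)G − p^{m−3}(2p−1) + p^{−3}(p−1)G² if c₁ = c₂ = 0 and c₃ ≠ 0; N = p^{2m−3} − p^{m−3}(p−1) − p^{m−3}G + p^{−3}(p−1)G² + p^{−2}η̄(−c₁c₂)(p^m − G)G if c₁ ≠ 0, c₂ ≠ 0 and c₃ = 0; N = p^{2m−3} + p^{m−3}(p−1)² − p^{m−3}G − p^{−3}(p−1)²G² if c₃ = 0 and exactly one of c₁, c₂ is zero; N = p^{2m−3} + p^{m−3}(p−1)(G−1) − p^{−3}G² if c₃ ≠ 0 and exactly one of c₁, c₂ is zero; N = p^{2m−3} − p^{m−3}(G−1) − p^{−3}G² if all c_i ≠ 0 and c₃² − c₁c₂ = 0; N = p^{2m−3} − p^{m−3}(2G−1)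 + p^{−3}(p+1)(p^m − G)G if all c_i ≠ 0 and η̄(c₃² − c₁c₂) = 1; and N = p^{2m−3} − p^{m−3}(2G−1) − p^{−3}(p−1)(p^m − G)G if all c_i ≠ 0 and η̄(c₃² − c₁c₂) = −1. -/

import Mathlib

open Finset
open scoped Classical

noncomputable section

/-- `ζ_p = exp(2πi/p)`. -/
def zeta (p : ℕ) : ℂ := Complex.exp (2 * Real.pi * Complex.I / p)

/-- The canonical additive character of `ℤ/p`: `χ̄₁(c) = ζ_p^c`. -/
def chiBar (p : ℕ) (c : ZMod p) : ℂ := zeta p ^ c.val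

/-- The quadratic character of `(ℤ/p)^*`, extended by `η̄(0) = 0`. -/
def etaBar (p : ℕ) (c : ZMod p) : ℂ :=
  if c = 0 then 0 else if IsSquare c then 1 else -1

/-- The quadratic character of `F^*`, extended by `η(0) = 0`. -/
def etaQ (F : Type) [Field F] (x : F) : ℂ :=
  if x = 0 then 0 else if IsSquare x then 1 else -1

/-- The absolute trace map from `F` to `ℤ/p`. -/
def Trq (p : ℕ) (F : Type) [Field F] [Algebra (ZMod p) F] (x : F) : ZMod p :=
  Algebra.trace (ZMod p) F x

/-- The canonical additive character of `F`: `χ₁(x) = ζ_p^{Tr x}`. -/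
def chiQ (p : ℕ) (F : Type) [Field F] [Algebra (ZMod p) F] (x : F) : ℂ :=
  chiBar p (Trq p F x)

/-- The quadratic Gauss sum `G` over `F`. -/
def GaussQ (p : ℕ) (F : Type) [Field F] [Fintype F] [Algebra (ZMod p) F] : ℂ :=
  ∑ x ∈ univ.filter (fun x : F => x ≠ 0), etaQ F x * chiQ p F x

/-- The quadratic Gauss sum `Ḡ` over `ℤ/p`. -/
def GaussP (p : ℕ) [NeZero p] : ℂ :=
  ∑ y ∈ univ.filter (fun y : ZMod p => y ≠ 0), etaBar p y * chiBar p y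

/-!
Write `K` for the base field, `q` for its cardinality and `Q` for that of the extension `F`.
Orthogonality of additive characters on `K³` turns the count `N` into
`q³ N = ∑ ψ(-(x c₁ + y c₂ + z c₃)) S(x, y, z)`, where `S(x, y, z)` is the exponential sum over `F²`
of the binary form `x a² + y b² + z a b`. As `[F : K]` is even, every element of `K` is a square in
`F`, so `S` depends only on the rank of the form: it is `Q²`, `Q G` or `Q` in rank 0, 1 or 2, and
`G² = Q`. Hence `q³ N` is a combination of three character sums: over `K³`, over the cone
`z² = 4 x y` and over the origin. Outside the plane `x = 0` the cone is parametrised by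
`(x, x t², 2 x t)`, and its character sum counts the projective zeros of the dual form
`c₁ + 2 c₃ t + c₂ t²`; that is where the quadratic character of `c₃² - c₁ c₂` comes from.
-/

section Orthogonality

variable {A R : Type*} [CommRing A] [Fintype A] [DecidableEq A] [CommRing R] [IsDomain R]
  {ψ : AddChar A R}

theorem sum_addChar_mulShift (hψ : ψ.IsPrimitive) (b : A) :
    ∑ x, ψ (x * b) = if b = 0 then (Fintype.card A : R) else 0 := by
  rw [AddChar.sum_mulShift b hψ, Nat.cast_ite, Nat.cast_zero]

theorem sum_addChar_triple (hψ : ψ.IsPrimitive) (d₁ d₂ d₃ : A) :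
    ∑ w : A × A × A, ψ (w.1 * d₁ + w.2.1 * d₂ + w.2.2 * d₃) =
      if d₁ = 0 ∧ d₂ = 0 ∧ d₃ = 0 then (Fintype.card A : R) ^ 3 else 0 := by
  simp only [AddChar.map_add_eq_mul, Fintype.sum_prod_type, ← Finset.mul_sum, ← Finset.sum_mul,
    sum_addChar_mulShift hψ, ite_and]
  split_ifs <;> ring

theorem card_pow_three_mul_card_filter (hψ : ψ.IsPrimitive) {ι : Type*} [Fintype ι]
    (f₁ f₂ f₃ : ι → A) (c₁ c₂ c₃ : A) :
    (Fintype.card A : R) ^ 3 * #{i | f₁ i = c₁ ∧ f₂ i = c₂ ∧ f₃ i = c₃} =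
      ∑ w : A × A × A, ψ (w.1 * -c₁ + w.2.1 * -c₂ + w.2.2 * -c₃) *
        ∑ i, ψ (w.1 * f₁ i + w.2.1 * f₂ i + w.2.2 * f₃ i) := by
  simp only [Finset.mul_sum, ← AddChar.map_add_eq_mul]
  rw [Finset.sum_comm, ← Finset.sum_boole, Finset.mul_sum]
  refine Finset.sum_congr rfl fun i _ ↦ ?_
  have h := sum_addChar_triple hψ (f₁ i - c₁) (f₂ i - c₂) (f₃ i - c₃)
  simp only [sub_eq_zero] at h
  rw [mul_ite, mul_one, mul_zero, ← h]
  exact Finset.sum_congr rfl fun w _ ↦ congrArg ψ (by ring)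

end Orthogonality

section FiniteField

variable {K R : Type*} [Field K] [Fintype K] [DecidableEq K] [CommRing R]

theorem card_sq_eq (hK : ringChar K ≠ 2) (y : K) :
    (#{a : K | a ^ 2 = y} : R) = 1 + quadraticChar K y := by
  have h := congrArg (Int.cast : ℤ → R) (quadraticChar_card_sqrts hK y)
  push_cast at h
  rw [add_comm, ← h, Set.toFinset_ofPred]

theorem sum_comp_sq (hK : ringChar K ≠ 2) (f : K → R) :
    ∑ a, f (a ^ 2) = ∑ x, (1 + quadraticChar K x) * f x := by
  rw [← Finset.sum_fiberwise univ (fun a : K ↦ a ^ 2)]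
  refine Finset.sum_congr rfl fun x _ ↦ ?_
  rw [← card_sq_eq hK, ← nsmul_eq_mul, ← Finset.sum_const]
  exact Finset.sum_congr rfl fun a ha ↦ congrArg f (Finset.mem_filter.mp ha).2

/-- The left-hand side counts the points of the projective line at which a nonzero binary quadratic
form vanishes; `if d₂ = 0` is the point at infinity. -/
theorem card_quadratic_roots_add_ite (hK : ringChar K ≠ 2) {d₁ d₂ d₃ : K}
    (hd : ¬(d₁ = 0 ∧ d₂ = 0 ∧ d₃ = 0)) :
    (#{t : K | d₁ + 2 * d₃ * t + d₂ * t ^ 2 = 0} : R) + (if d₂ = 0 then 1 else 0) =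
      1 + quadraticChar K (d₃ ^ 2 - d₁ * d₂) := by
  have h2 : (2 : K) ≠ 0 := Ring.two_ne_zero hK
  by_cases h₂ : d₂ = 0
  · subst h₂
    by_cases h₃ : d₃ = 0
    · have h₁ : d₁ ≠ 0 := fun h ↦ hd ⟨h, rfl, h₃⟩
      simp [h₁, h₃]
    · have root_iff (t : K) : d₁ + 2 * d₃ * t + 0 * t ^ 2 = 0 ↔ t = -d₁ / (2 * d₃) := by
        rw [eq_div_iff (mul_ne_zero h2 h₃)]
        constructor <;> intro h <;> linear_combination h
      have card_roots : #{t : K | d₁ + 2 * d₃ * t + 0 * t ^ 2 = 0} = 1 := by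
        simp only [root_iff, Finset.filter_eq', Finset.mem_univ, if_true, Finset.card_singleton]
      rw [card_roots, if_pos rfl, mul_zero, sub_zero, quadraticChar_sq_one' h₃]
      push_cast
      rfl
  · have root_iff (t : K) : d₁ + 2 * d₃ * t + d₂ * t ^ 2 = 0 ↔
        (d₂ * t + d₃) ^ 2 = d₃ ^ 2 - d₁ * d₂ := by
      rw [← mul_right_inj' h₂]
      constructor <;> intro h <;> linear_combination h
    rw [if_neg h₂, add_zero, ← card_sq_eq hK]
    congr 1
    refine Finset.card_equiv ((Equiv.mulLeft₀ d₂ h₂).trans (Equiv.addRight d₃)) fun t ↦ ?_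
    simp [root_iff]

variable [IsDomain R] {ψ : AddChar K R}

theorem sum_addChar_cone_fiber (hK : ringChar K ≠ 2) (hψ : ψ.IsPrimitive) (d₁ d₂ d₃ x : K) :
    ∑ y, ∑ z, (if discrim x z y = 0 then ψ (x * d₁ + y * d₂ + z * d₃) else 0) =
      (if x = 0 then (if d₂ = 0 then (Fintype.card K : R) else 0) - Fintype.card K else 0) +
        ∑ t, ψ (x * (d₁ + 2 * d₃ * t + d₂ * t ^ 2)) := by
  have h2 : (2 : K) ≠ 0 := Ring.two_ne_zero hK
  by_cases hx : x = 0
  · simp [hx, discrim, sum_addChar_mulShift hψ]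
  · rw [Finset.sum_comm, if_neg hx, zero_add]
    symm
    refine Fintype.sum_equiv (Equiv.mulLeft₀ (2 * x) (mul_ne_zero h2 hx)) _ _ fun t ↦ ?_
    have discrim_iff (y : K) : discrim x (2 * x * t) y = 0 ↔ y = x * t ^ 2 := by
      rw [discrim, ← mul_right_inj' (mul_ne_zero (mul_ne_zero h2 h2) hx) (b := y)]
      constructor <;> intro h <;> linear_combination -h
    simp only [Equiv.mulLeft₀_apply, discrim_iff, Finset.sum_ite_eq', Finset.mem_univ, if_true]
    exact congrArg ψ (by ring)

theorem sum_addChar_cone (hK : ringChar K ≠ 2) (hψ : ψ.IsPrimitive) (d₁ d₂ d₃ : K) :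
    ∑ w : K × K × K with discrim w.1 w.2.2 w.2.1 = 0,
        ψ (w.1 * d₁ + w.2.1 * d₂ + w.2.2 * d₃) =
      if d₁ = 0 ∧ d₂ = 0 ∧ d₃ = 0 then (Fintype.card K : R) ^ 2
      else Fintype.card K * quadraticChar K (d₃ ^ 2 - d₁ * d₂) := by
  have roots_sum : ∑ x, ∑ t, ψ (x * (d₁ + 2 * d₃ * t + d₂ * t ^ 2)) =
      Fintype.card K * (#{t : K | d₁ + 2 * d₃ * t + d₂ * t ^ 2 = 0} : R) := by
    rw [Finset.sum_comm]
    simp only [sum_addChar_mulShift hψ, ← Finset.sum_boole, Finset.mul_sum, mul_ite, mul_one,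
      mul_zero]
  rw [Finset.sum_filter]
  simp only [Fintype.sum_prod_type, sum_addChar_cone_fiber hK hψ, Finset.sum_add_distrib,
    roots_sum, Finset.sum_ite_eq', Finset.mem_univ, if_true]
  split_ifs with h₂ hd hd
  · simp [hd, sq]
  · have h := card_quadratic_roots_add_ite (R := R) hK hd
    rw [if_pos h₂] at h
    linear_combination (Fintype.card K : R) * h
  · exact absurd hd.2.1 h₂
  · have h := card_quadratic_roots_add_ite (R := R) hK hd
    rw [if_neg h₂] at h
    linear_combination (Fintype.card K : R) * h

end FiniteField

section BinaryForm

variable {F R : Type*} [Field F] [Fintype F] [CommRing R]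

/-- The quadratic Gauss sum of an additive character, in the form `∑ a, ψ (a ^ 2)`, which needs no
quadratic character. For nontrivial `ψ` and odd characteristic it is the usual Gauss sum; see
`quadGaussSum_eq_sum_quadraticChar`. -/
def quadGaussSum (ψ : AddChar F R) : R := ∑ a, ψ (a ^ 2)

/-- The exponential sum of the binary quadratic form `x a² + z a b + y b²`; the coefficient of the
mixed term comes last. -/
def binaryFormSum (ψ : AddChar F R) (x y z : F) : R :=
  ∑ a, ∑ b, ψ (x * a ^ 2 + y * b ^ 2 + z * (a * b))

theorem sum_addChar_mul_sq_of_isSquare (ψ : AddChar F R) {c : F} (hc : IsSquare c) (hc0 : c ≠ 0) :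
    ∑ a, ψ (c * a ^ 2) = quadGaussSum ψ := by
  obtain ⟨r, rfl⟩ := hc
  exact Fintype.sum_equiv (Equiv.mulLeft₀ r (left_ne_zero_of_mul hc0)) _ _ fun a ↦
    congrArg ψ (by rw [Equiv.mulLeft₀_apply]; ring)

theorem binaryFormSum_swap (ψ : AddChar F R) (x y z : F) :
    binaryFormSum ψ x y z = binaryFormSum ψ y x z := by
  unfold binaryFormSum
  rw [Finset.sum_comm]
  exact Finset.sum_congr rfl fun a _ ↦ Finset.sum_congr rfl fun b _ ↦ congrArg ψ (by ring)

theorem binaryFormSum_shear (ψ : AddChar F R) (x y z r : F) :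
    binaryFormSum ψ x y z = binaryFormSum ψ x (x * (r * r) + z * r + y) (z + 2 * x * r) := by
  unfold binaryFormSum
  rw [Finset.sum_comm]
  symm
  rw [Finset.sum_comm]
  refine Finset.sum_congr rfl fun b _ ↦ Fintype.sum_equiv (Equiv.addRight (r * b)) _ _ fun a ↦ ?_
  exact congrArg ψ (by rw [Equiv.coe_addRight]; ring)

variable [IsDomain R] {ψ : AddChar F R}

theorem quadGaussSum_eq_sum_quadraticChar [DecidableEq F] (hF : ringChar F ≠ 2)
    (hψ : ψ.IsPrimitive) : quadGaussSum ψ = ∑ x, quadraticChar F x * ψ x := by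
  have sum_eq_zero : ∑ x, ψ x = 0 := by
    simpa only [mul_one, one_ne_zero, if_false] using sum_addChar_mulShift hψ 1
  simp only [quadGaussSum, sum_comp_sq hF, add_mul, one_mul, Finset.sum_add_distrib, sum_eq_zero,
    zero_add]

theorem binaryFormSum_zero_right [DecidableEq F] (hψ : ψ.IsPrimitive) (x z : F) :
    binaryFormSum ψ x 0 z =
      Fintype.card F * if z = 0 then ∑ a, ψ (x * a ^ 2) else 1 := by
  have inner (a : F) : ∑ b, ψ (x * a ^ 2 + 0 * b ^ 2 + z * (a * b)) =
      ψ (x * a ^ 2) * if z * a = 0 then (Fintype.card F : R) else 0 := by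
    rw [← sum_addChar_mulShift hψ, Finset.mul_sum]
    simp only [← AddChar.map_add_eq_mul]
    exact Finset.sum_congr rfl fun b _ ↦ congrArg ψ (by ring)
  simp only [binaryFormSum, inner]
  split_ifs with hz
  · simp [hz, Finset.mul_sum, mul_comm]
  · simp [hz]

/-- A root of the form, used as a shear parameter, removes the coefficient of `b ^ 2`; the
mixed coefficient becomes a square root of the discriminant. -/
theorem binaryFormSum_of_discrim_ne_zero (hF : ringChar F ≠ 2) (hψ : ψ.IsPrimitive) {x y z : F}
    (hsq : IsSquare (discrim x z y)) (h0 : discrim x z y ≠ 0) :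
    binaryFormSum ψ x y z = Fintype.card F := by
  have : NeZero (2 : F) := ⟨Ring.two_ne_zero hF⟩
  by_cases hx : x = 0
  · have hz : z ≠ 0 := by
      rintro rfl
      exact h0 (by rw [hx, discrim]; ring)
    rw [binaryFormSum_swap, hx, binaryFormSum_zero_right hψ, if_neg hz, mul_one]
  · obtain ⟨r, hr⟩ := exists_quadratic_eq_zero hx hsq
    have hz : z + 2 * x * r ≠ 0 := by
      rw [discrim_eq_sq_of_quadratic_eq_zero hr, add_comm] at h0
      exact pow_ne_zero_iff two_ne_zero |>.mp h0
    rw [binaryFormSum_shear ψ x y z r, hr, binaryFormSum_zero_right hψ, if_neg hz, mul_one]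

theorem binaryFormSum_of_discrim_eq_zero_of_left_ne_zero (hF : ringChar F ≠ 2)
    (hψ : ψ.IsPrimitive) {x y z : F} (hx : x ≠ 0) (h0 : discrim x z y = 0) :
    binaryFormSum ψ x y z = Fintype.card F * ∑ a, ψ (x * a ^ 2) := by
  have : NeZero (2 : F) := ⟨Ring.two_ne_zero hF⟩
  obtain ⟨r, hr⟩ := exists_quadratic_eq_zero hx ⟨0, by rw [h0, mul_zero]⟩
  have hz : z + 2 * x * r = 0 := by
    rw [discrim_eq_sq_of_quadratic_eq_zero hr, add_comm] at h0
    exact pow_eq_zero_iff two_ne_zero |>.mp h0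
  rw [binaryFormSum_shear ψ x y z r, hr, hz, binaryFormSum_zero_right hψ, if_pos rfl]

theorem binaryFormSum_of_discrim_eq_zero (hF : ringChar F ≠ 2) (hψ : ψ.IsPrimitive) {x y z : F}
    (hx : IsSquare x) (hy : IsSquare y) (hw : (x, y, z) ≠ 0) (h0 : discrim x z y = 0) :
    binaryFormSum ψ x y z = Fintype.card F * quadGaussSum ψ := by
  by_cases hx0 : x = 0
  · have hz0 : z = 0 := by simpa [hx0, discrim] using h0
    have hy0 : y ≠ 0 := by simpa [hx0, hz0] using hw
    rw [binaryFormSum_swap, binaryFormSum_of_discrim_eq_zero_of_left_ne_zero hF hψ hy0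
      (by rw [hx0, hz0, discrim]; ring), sum_addChar_mul_sq_of_isSquare ψ hy hy0]
  · rw [binaryFormSum_of_discrim_eq_zero_of_left_ne_zero hF hψ hx0 h0,
      sum_addChar_mul_sq_of_isSquare ψ hx hx0]

theorem binaryFormSum_eq [DecidableEq F] (hF : ringChar F ≠ 2) (hψ : ψ.IsPrimitive) {x y z : F}
    (hx : IsSquare x) (hy : IsSquare y) (hsq : IsSquare (discrim x z y)) :
    binaryFormSum ψ x y z = Fintype.card F *
      (1 + (quadGaussSum ψ - 1) * (if discrim x z y = 0 then 1 else 0) +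
        (Fintype.card F - quadGaussSum ψ) * (if (x, y, z) = 0 then 1 else 0)) := by
  by_cases hw : (x, y, z) = 0
  · obtain ⟨rfl, rfl, rfl⟩ : x = 0 ∧ y = 0 ∧ z = 0 := by simpa using hw
    simp [binaryFormSum, discrim]
  · by_cases h0 : discrim x z y = 0
    · rw [binaryFormSum_of_discrim_eq_zero hF hψ hx hy hw h0, if_pos h0, if_neg hw]
      ring
    · rw [binaryFormSum_of_discrim_ne_zero hF hψ hsq h0, if_neg h0, if_neg hw]
      ring

/-- The square of the Gauss sum is the exponential sum of the form `a² + b²`, whose discriminant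
`-4` is a square. -/
theorem quadGaussSum_sq (hF : ringChar F ≠ 2) (hψ : ψ.IsPrimitive) (hneg : IsSquare (-1 : F)) :
    quadGaussSum ψ ^ 2 = Fintype.card F := by
  have discrim_eq : discrim (1 : F) 0 1 = -1 * (2 * 2) := by rw [discrim]; ring
  have h2 : (2 : F) ≠ 0 := Ring.two_ne_zero hF
  rw [← binaryFormSum_of_discrim_ne_zero hF hψ (x := 1) (y := 1) (z := 0)]
  · simp only [sq, quadGaussSum, binaryFormSum, Finset.sum_mul_sum, one_mul, zero_mul, add_zero,
      AddChar.map_add_eq_mul]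
  · exact discrim_eq ▸ hneg.mul (IsSquare.mul_self 2)
  · exact discrim_eq ▸ mul_ne_zero (neg_ne_zero.mpr one_ne_zero) (mul_ne_zero h2 h2)

end BinaryForm

section Trace

theorem isSquare_algebraMap_of_even_finrank {K F : Type*} [Field K] [Finite K] [Field F] [Finite F]
    [Algebra K F] (heven : Even (Module.finrank K F)) (c : K) : IsSquare (algebraMap K F c) := by
  have := Fintype.ofFinite K
  have := Fintype.ofFinite F
  by_cases hF : ringChar F = 2
  · exact FiniteField.isSquare_of_char_two hF _
  by_cases hc : c = 0
  · rw [hc, map_zero]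
    exact IsSquare.zero
  obtain ⟨k, hk⟩ := heven
  have hcard : Fintype.card F = Fintype.card K ^ k * Fintype.card K ^ k := by
    rw [Module.card_eq_pow_finrank (K := K), hk, pow_add]
  obtain ⟨r, hr⟩ : Odd (Fintype.card K ^ k) :=
    (Nat.odd_mul.mp (hcard ▸ Nat.odd_iff.mpr (FiniteField.odd_card_of_char_ne_two hF))).1
  have half_card : Fintype.card F / 2 = (Fintype.card K ^ k - 1) * (r + 1) := by
    rw [hcard, hr, Nat.add_sub_cancel,
      show (2 * r + 1) * (2 * r + 1) = 2 * (2 * r * (r + 1)) + 1 by ring]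
    lia
  obtain ⟨s, hs⟩ : Fintype.card K - 1 ∣ Fintype.card K ^ k - 1 := by
    simpa only [one_pow] using Nat.sub_dvd_pow_sub_pow (Fintype.card K) 1 k
  rw [FiniteField.isSquare_iff hF (by simpa using hc), ← map_pow, half_card, hs, mul_assoc,
    pow_mul, FiniteField.pow_card_sub_one_eq_one c hc, one_pow, map_one]

theorem card_ne_zero_of_isPrimitive {K E : Type*} [Field K] [Fintype K] [Field E]
    {ψ : AddChar K E} (hψ : ψ.IsPrimitive) : (Fintype.card K : E) ≠ 0 := by
  intro h
  obtain ⟨a, ha⟩ := AddChar.ne_one_iff.mp (hψ one_ne_zero)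
  rw [AddChar.mulShift_apply, one_mul] at ha
  obtain ⟨p, _⟩ := CharP.exists K
  obtain ⟨n, hp, hn⟩ := FiniteField.card K p
  have : Fact p.Prime := ⟨hp⟩
  have hpE : (p : E) = 0 := by
    rw [hn, Nat.cast_pow] at h
    exact eq_zero_of_pow_eq_zero h
  have : CharP E p := (CharP.charP_iff_prime_eq_zero hp).mpr hpE
  have hpow : ψ a ^ p ^ (n : ℕ) = 1 := by
    rw [← hn, ← AddChar.map_nsmul_eq_pow, card_nsmul_eq_zero, AddChar.map_zero_eq_one]
  have : (ψ a - 1) ^ p ^ (n : ℕ) = 0 := by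
    rw [sub_pow_char_pow, hpow, one_pow, sub_self]
  exact ha (sub_eq_zero.mp (eq_zero_of_pow_eq_zero this))

section Lift

variable {K : Type*} (F : Type*) {R : Type*} [Field K] [Field F] [Algebra K F] [CommRing R]

/-- The lift `ψ ∘ Tr` of an additive character of `K` to the extension field `F`. -/
def traceChar (ψ : AddChar K R) : AddChar F R :=
  ψ.compAddMonoidHom (Algebra.trace K F).toAddMonoidHom

theorem traceChar_apply (ψ : AddChar K R) (x : F) :
    traceChar F ψ x = ψ (Algebra.trace K F x) := rfl

theorem isPrimitive_traceChar [Finite F] {ψ : AddChar K R} (hψ : ψ.IsPrimitive) :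
    (traceChar F ψ).IsPrimitive := by
  have : Finite K := Finite.of_injective _ (algebraMap K F).injective
  refine AddChar.IsPrimitive.of_ne_one (AddChar.ne_one_iff.mpr ?_)
  obtain ⟨c, hc⟩ := AddChar.ne_one_iff.mp (hψ one_ne_zero)
  obtain ⟨x, rfl⟩ := Algebra.trace_surjective K F c
  exact ⟨x, by simpa only [AddChar.mulShift_apply, one_mul, traceChar_apply] using hc⟩

theorem quadGaussSum_traceChar_sq [Fintype F] [IsDomain R] {ψ : AddChar K R}
    (hK : ringChar K ≠ 2) (heven : Even (Module.finrank K F)) (hψ : ψ.IsPrimitive) :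
    quadGaussSum (traceChar F ψ) ^ 2 = Fintype.card F := by
  have : Finite K := Finite.of_injective _ (algebraMap K F).injective
  have isSquare_neg_one : IsSquare (-1 : F) := by
    simpa only [map_neg, map_one] using isSquare_algebraMap_of_even_finrank (F := F) heven (-1 : K)
  exact quadGaussSum_sq (by rwa [← Algebra.ringChar_eq K F]) (isPrimitive_traceChar F hψ)
    isSquare_neg_one

end Lift

variable {K : Type*} (F : Type*) {R : Type*} [Field K] [Field F] [Fintype F] [Algebra K F]
  [DecidableEq K]

/-- The pairs `(a, b)` for which the trace form `(u, v) ↦ Tr (u v)` has Gram matrix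
`!![c₁, c₃; c₃, c₂]`. -/
def traceGramPairs (c₁ c₂ c₃ : K) : Finset (F × F) :=
  {ab | Algebra.trace K F (ab.1 ^ 2) = c₁ ∧ Algebra.trace K F (ab.2 ^ 2) = c₂ ∧
    Algebra.trace K F (ab.1 * ab.2) = c₃}

variable [CommRing R] [IsDomain R] {ψ : AddChar K R}

theorem sum_addChar_trace_binaryForm (hK : ringChar K ≠ 2) (heven : Even (Module.finrank K F))
    (hψ : ψ.IsPrimitive) (w : K × K × K) :
    ∑ ab : F × F, ψ (w.1 * Algebra.trace K F (ab.1 ^ 2) + w.2.1 * Algebra.trace K F (ab.2 ^ 2) +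
        w.2.2 * Algebra.trace K F (ab.1 * ab.2)) =
      Fintype.card F * (1 +
        (quadGaussSum (traceChar F ψ) - 1) * (if discrim w.1 w.2.2 w.2.1 = 0 then 1 else 0) +
        (Fintype.card F - quadGaussSum (traceChar F ψ)) * (if w = 0 then 1 else 0)) := by
  have : Finite K := Finite.of_injective _ (algebraMap K F).injective
  obtain ⟨x, y, z⟩ := w
  have hF : ringChar F ≠ 2 := by rwa [← Algebra.ringChar_eq K F]
  have isSq := isSquare_algebraMap_of_even_finrank (F := F) heven
  have discrim_map : discrim (algebraMap K F x) (algebraMap K F z) (algebraMap K F y) =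
      algebraMap K F (discrim x z y) := by
    simp only [discrim, map_sub, map_pow, map_mul, map_ofNat]
  have h := binaryFormSum_eq hF (isPrimitive_traceChar F hψ) (isSq x) (isSq y)
    (discrim_map ▸ isSq (discrim x z y))
  simp only [discrim_map, Prod.mk_eq_zero, map_eq_zero] at h
  simp only [Prod.mk_eq_zero, ← h, binaryFormSum, Fintype.sum_prod_type, traceChar_apply, map_add,
    ← Algebra.smul_def, map_smul, smul_eq_mul]

theorem card_pow_three_mul_card_traceGramPairs [Fintype K] (hK : ringChar K ≠ 2)
    (heven : Even (Module.finrank K F)) (hψ : ψ.IsPrimitive) (c₁ c₂ c₃ : K) :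
    (Fintype.card K : R) ^ 3 * #(traceGramPairs F c₁ c₂ c₃) =
      Fintype.card F * ((if c₁ = 0 ∧ c₂ = 0 ∧ c₃ = 0 then (Fintype.card K : R) ^ 3 else 0) +
        (quadGaussSum (traceChar F ψ) - 1) *
          (if c₁ = 0 ∧ c₂ = 0 ∧ c₃ = 0 then (Fintype.card K : R) ^ 2
            else Fintype.card K * quadraticChar K (c₃ ^ 2 - c₁ * c₂)) +
        (Fintype.card F - quadGaussSum (traceChar F ψ))) := by
  have space := sum_addChar_triple hψ (-c₁) (-c₂) (-c₃)
  have cone := sum_addChar_cone hK hψ (-c₁) (-c₂) (-c₃)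
  have origin (k : R) : ∑ w : K × K × K, ψ (w.1 * -c₁ + w.2.1 * -c₂ + w.2.2 * -c₃) *
      (if w = 0 then k else 0) = k := by simp
  simp only [neg_eq_zero, neg_sq, neg_mul_neg, Finset.sum_filter] at space cone
  rw [traceGramPairs, card_pow_three_mul_card_filter hψ, ← space, ← cone,
    ← origin (_ - quadGaussSum _)]
  simp only [sum_addChar_trace_binaryForm F hK heven hψ, Finset.mul_sum,
    ← Finset.sum_add_distrib]
  exact Finset.sum_congr rfl fun w _ ↦ by split_ifs <;> ring

end Trace

section Count

variable {K E : Type*} (F : Type*) [Field K] [Fintype K] [Field F] [Fintype F]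
  [Algebra K F] [Field E] {ψ : AddChar K E}

theorem card_pow_finrank_eq_quadGaussSum_sq (hK : ringChar K ≠ 2)
    (heven : Even (Module.finrank K F)) (hψ : ψ.IsPrimitive) :
    (Fintype.card K : E) ^ Module.finrank K F = quadGaussSum (traceChar F ψ) ^ 2 := by
  rw [quadGaussSum_traceChar_sq F hK heven hψ, Module.card_eq_pow_finrank (K := K) (V := F),
    Nat.cast_pow]

theorem card_zpow_finrank_sub_three (hK : ringChar K ≠ 2) (heven : Even (Module.finrank K F))
    (hψ : ψ.IsPrimitive) :
    (Fintype.card K : E) ^ ((Module.finrank K F : ℤ) - 3) =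
      quadGaussSum (traceChar F ψ) ^ 2 / Fintype.card K ^ 3 := by
  rw [zpow_sub₀ (card_ne_zero_of_isPrimitive hψ), zpow_natCast, zpow_ofNat,
    card_pow_finrank_eq_quadGaussSum_sq F hK heven hψ]

theorem card_zpow_two_mul_finrank_sub_three (hK : ringChar K ≠ 2)
    (heven : Even (Module.finrank K F)) (hψ : ψ.IsPrimitive) :
    (Fintype.card K : E) ^ (2 * (Module.finrank K F : ℤ) - 3) =
      quadGaussSum (traceChar F ψ) ^ 4 / Fintype.card K ^ 3 := by
  rw [two_mul, add_sub_assoc, zpow_add₀ (card_ne_zero_of_isPrimitive hψ), zpow_natCast,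
    card_pow_finrank_eq_quadGaussSum_sq F hK heven hψ,
    card_zpow_finrank_sub_three F hK heven hψ]
  ring

variable [DecidableEq K]

theorem card_traceGramPairs_zero (hK : ringChar K ≠ 2) (heven : Even (Module.finrank K F))
    (hψ : ψ.IsPrimitive) {G : E} (hG : quadGaussSum (traceChar F ψ) = G) :
    (#(traceGramPairs F (0 : K) 0 0) : E) =
      G ^ 2 * (Fintype.card K ^ 3 + (G - 1) * Fintype.card K ^ 2 + (G ^ 2 - G)) /
        Fintype.card K ^ 3 := by
  have h := card_pow_three_mul_card_traceGramPairs F hK heven hψ 0 0 0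
  simp only [and_self, if_true, ← quadGaussSum_traceChar_sq F hK heven hψ, hG] at h
  rw [eq_div_iff (pow_ne_zero 3 (card_ne_zero_of_isPrimitive hψ)), mul_comm, h]

theorem card_traceGramPairs_of_ne_zero (hK : ringChar K ≠ 2) (heven : Even (Module.finrank K F))
    (hψ : ψ.IsPrimitive) {G : E} (hG : quadGaussSum (traceChar F ψ) = G) {c₁ c₂ c₃ : K}
    (hc : ¬(c₁ = 0 ∧ c₂ = 0 ∧ c₃ = 0)) {ε : ℤ} (hε : quadraticChar K (c₃ ^ 2 - c₁ * c₂) = ε) :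
    (#(traceGramPairs F c₁ c₂ c₃) : E) =
      G ^ 2 * ((G - 1) * (Fintype.card K * ε) + (G ^ 2 - G)) / Fintype.card K ^ 3 := by
  have h := card_pow_three_mul_card_traceGramPairs F hK heven hψ c₁ c₂ c₃
  simp only [hc, if_false, zero_add, hε, ← quadGaussSum_traceChar_sq F hK heven hψ, hG] at h
  rw [eq_div_iff (pow_ne_zero 3 (card_ne_zero_of_isPrimitive hψ)), mul_comm, h]

theorem N3_card_m_even_general {q m : ℕ} (hq : Fintype.card K = q) (hm : Module.finrank K F = m)
    (hK : ringChar K ≠ 2) (heven : Even m) (hψ : ψ.IsPrimitive) {G : E}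
    (hG : quadGaussSum (traceChar F ψ) = G) (c₁ c₂ c₃ : K) :
    (c₁ = 0 ∧ c₂ = 0 ∧ c₃ = 0 →
      (#(traceGramPairs F c₁ c₂ c₃) : E) =
        (q : E) ^ (2 * (m : ℤ) - 3) + (q : E) ^ ((m : ℤ) - 3) * (q - 1) * (2 * q - 1) +
          (q : E) ^ ((m : ℤ) - 3) * (q ^ 2 - 1) * G + (q : E) ^ (-3 : ℤ) * (q - 1) ^ 3 * G ^ 2) ∧
    (c₁ = 0 ∧ c₂ = 0 ∧ c₃ ≠ 0 →
      (#(traceGramPairs F c₁ c₂ c₃) : E) =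
        (q : E) ^ (2 * (m : ℤ) - 3) + (q : E) ^ ((m : ℤ) - 3) * (q - 1) * G -
          (q : E) ^ ((m : ℤ) - 3) * (2 * q - 1) + (q : E) ^ (-3 : ℤ) * (q - 1) * G ^ 2) ∧
    (c₁ ≠ 0 ∧ c₂ ≠ 0 ∧ c₃ = 0 →
      (#(traceGramPairs F c₁ c₂ c₃) : E) =
        (q : E) ^ (2 * (m : ℤ) - 3) - (q : E) ^ ((m : ℤ) - 3) * (q - 1) -
          (q : E) ^ ((m : ℤ) - 3) * G + (q : E) ^ (-3 : ℤ) * (q - 1) * G ^ 2 +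
          (q : E) ^ (-2 : ℤ) * quadraticChar K (-(c₁ * c₂)) * (q ^ m - G) * G) ∧
    (c₃ = 0 ∧ ((c₁ = 0 ∧ c₂ ≠ 0) ∨ (c₁ ≠ 0 ∧ c₂ = 0)) →
      (#(traceGramPairs F c₁ c₂ c₃) : E) =
        (q : E) ^ (2 * (m : ℤ) - 3) + (q : E) ^ ((m : ℤ) - 3) * (q - 1) ^ 2 -
          (q : E) ^ ((m : ℤ) - 3) * G - (q : E) ^ (-3 : ℤ) * (q - 1) ^ 2 * G ^ 2) ∧
    (c₃ ≠ 0 ∧ ((c₁ = 0 ∧ c₂ ≠ 0) ∨ (c₁ ≠ 0 ∧ c₂ = 0)) →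
      (#(traceGramPairs F c₁ c₂ c₃) : E) =
        (q : E) ^ (2 * (m : ℤ) - 3) + (q : E) ^ ((m : ℤ) - 3) * (q - 1) * (G - 1) -
          (q : E) ^ (-3 : ℤ) * G ^ 2) ∧
    ((c₁ ≠ 0 ∧ c₂ ≠ 0 ∧ c₃ ≠ 0) ∧ c₃ ^ 2 - c₁ * c₂ = 0 →
      (#(traceGramPairs F c₁ c₂ c₃) : E) =
        (q : E) ^ (2 * (m : ℤ) - 3) - (q : E) ^ ((m : ℤ) - 3) * (G - 1) -
          (q : E) ^ (-3 : ℤ) * G ^ 2) ∧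
    ((c₁ ≠ 0 ∧ c₂ ≠ 0 ∧ c₃ ≠ 0) ∧ quadraticChar K (c₃ ^ 2 - c₁ * c₂) = 1 →
      (#(traceGramPairs F c₁ c₂ c₃) : E) =
        (q : E) ^ (2 * (m : ℤ) - 3) - (q : E) ^ ((m : ℤ) - 3) * (2 * G - 1) +
          (q : E) ^ (-3 : ℤ) * (q + 1) * (q ^ m - G) * G) ∧
    ((c₁ ≠ 0 ∧ c₂ ≠ 0 ∧ c₃ ≠ 0) ∧ quadraticChar K (c₃ ^ 2 - c₁ * c₂) = -1 →
      (#(traceGramPairs F c₁ c₂ c₃) : E) =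
        (q : E) ^ (2 * (m : ℤ) - 3) - (q : E) ^ ((m : ℤ) - 3) * (2 * G - 1) -
          (q : E) ^ (-3 : ℤ) * (q - 1) * (q ^ m - G) * G) := by
  subst hq hm
  have card_ne_zero : (Fintype.card K : E) ≠ 0 := card_ne_zero_of_isPrimitive hψ
  have count_ne_zero {ε : ℤ} (hc : ¬(c₁ = 0 ∧ c₂ = 0 ∧ c₃ = 0)) :=
    card_traceGramPairs_of_ne_zero (ε := ε) F hK heven hψ hG hc
  have discrim_sq (h₃ : c₃ ≠ 0) (h : c₁ = 0 ∨ c₂ = 0) :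
      quadraticChar K (c₃ ^ 2 - c₁ * c₂) = 1 := by
    rw [mul_eq_zero.mpr h, sub_zero, quadraticChar_sq_one' h₃]
  have discrim_zero (h₃ : c₃ = 0) (h : c₁ = 0 ∨ c₂ = 0) :
      quadraticChar K (c₃ ^ 2 - c₁ * c₂) = 0 := by
    rw [mul_eq_zero.mpr h, h₃, sq, mul_zero, sub_zero, quadraticChar_zero]
  rw [card_zpow_two_mul_finrank_sub_three F hK heven hψ, card_zpow_finrank_sub_three F hK heven hψ,
    card_pow_finrank_eq_quadGaussSum_sq F hK heven hψ, hG]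
  refine ⟨fun ⟨h₁, h₂, h₃⟩ ↦ ?_,
    fun ⟨h₁, _, h₃⟩ ↦ (count_ne_zero (by tauto) (discrim_sq h₃ (.inl h₁))).trans ?_,
    fun ⟨h₁, _, h₃⟩ ↦ (count_ne_zero (by tauto) (by rw [h₃, sq, mul_zero, zero_sub])).trans ?_,
    fun ⟨h₃, h⟩ ↦ (count_ne_zero (by tauto) (discrim_zero h₃ (by tauto))).trans ?_,
    fun ⟨h₃, h⟩ ↦ (count_ne_zero (by tauto) (discrim_sq h₃ (by tauto))).trans ?_,
    fun ⟨h, h₀⟩ ↦ (count_ne_zero (by tauto) (by rw [h₀, quadraticChar_zero])).trans ?_,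
    fun ⟨h, hε⟩ ↦ (count_ne_zero (by tauto) hε).trans ?_,
    fun ⟨h, hε⟩ ↦ (count_ne_zero (by tauto) hε).trans ?_⟩
  · rw [h₁, h₂, h₃, card_traceGramPairs_zero F hK heven hψ hG]
    field_simp
    ring
  all_goals
    field_simp
    ring

end Count

section PrimeField

theorem etaQ_eq_quadraticChar (F : Type) [Field F] [Fintype F] (x : F) :
    etaQ F x = quadraticChar F x := by
  simp only [etaQ, quadraticChar_apply, quadraticCharFun]
  split_ifs <;> simp

variable (p : ℕ) [Fact p.Prime]

theorem etaBar_eq_quadraticChar (c : ZMod p) : etaBar p c = quadraticChar (ZMod p) c := by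
  simp only [etaBar, quadraticChar_apply, quadraticCharFun]
  split_ifs <;> simp

theorem chiBar_eq_stdAddChar (c : ZMod p) : chiBar p c = ZMod.stdAddChar c := by
  rw [ZMod.stdAddChar_apply, ZMod.toCircle_apply, chiBar, zeta, ← Complex.exp_nat_mul]
  congr 1
  ring

variable {p}

theorem ringChar_zmod_ne_two (hp : Odd p) : ringChar (ZMod p) ≠ 2 := by
  rw [ZMod.ringChar_zmod_n]
  rintro rfl
  exact absurd hp (by decide)

theorem quadGaussSum_eq_GaussQ (hp : Odd p) (F : Type) [Field F] [Fintype F]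
    [Algebra (ZMod p) F] :
    quadGaussSum (traceChar F (ZMod.stdAddChar (N := p))) = GaussQ p F := by
  have hF : ringChar F ≠ 2 := by
    rw [← Algebra.ringChar_eq (ZMod p) F]
    exact ringChar_zmod_ne_two hp
  rw [quadGaussSum_eq_sum_quadraticChar hF
    (isPrimitive_traceChar F (ZMod.isPrimitive_stdAddChar p)), GaussQ, Finset.sum_filter]
  refine Finset.sum_congr rfl fun x _ ↦ ?_
  rw [chiQ, chiBar_eq_stdAddChar, etaQ_eq_quadraticChar, traceChar_apply, Trq]
  split_ifs with hx
  · rfl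
  · rw [not_not.mp hx, quadraticChar_zero, Int.cast_zero, zero_mul]

theorem finrank_eq_of_card_eq_pow {F : Type*} [Field F] [Fintype F] [Algebra (ZMod p) F] {m : ℕ}
    (hq : Fintype.card F = p ^ m) : Module.finrank (ZMod p) F = m := by
  rw [Module.card_eq_pow_finrank (K := ZMod p), ZMod.card] at hq
  exact Nat.pow_right_injective (Fact.out : p.Prime).two_le hq

end PrimeField

theorem N3_card_m_even (p m : ℕ) [Fact (Nat.Prime p)] (hp : Odd p)
    (F : Type) [Field F] [Fintype F] [Algebra (ZMod p) F]
    (hm : 0 < m) (hq : Fintype.card F = p ^ m)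
    (hmeven : Even m) (c₁ c₂ c₃ : ZMod p) :
    (c₁ = 0 ∧ c₂ = 0 ∧ c₃ = 0 →
      (((univ.filter (fun ab : F × F =>
      Trq p F (ab.1 ^ 2) = c₁ ∧ Trq p F (ab.2 ^ 2) = c₂ ∧
        Trq p F (ab.1 * ab.2) = c₃)).card : ℕ) : ℂ) = (p : ℂ) ^ (2 * (m : ℤ) - 3 : ℤ) + (p : ℂ) ^ ((m : ℤ) - 3 : ℤ) * ((p : ℂ) - 1) * (2 * (p : ℂ) - 1) + (p : ℂ) ^ ((m : ℤ) - 3 : ℤ) * ((p : ℂ) ^ 2 - 1) * GaussQ p F + (p : ℂ) ^ (-3 : ℤ) * ((p : ℂ) - 1) ^ 3 * (GaussQ p F) ^ 2) ∧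
    (c₁ = 0 ∧ c₂ = 0 ∧ c₃ ≠ 0 →
      (((univ.filter (fun ab : F × F =>
      Trq p F (ab.1 ^ 2) = c₁ ∧ Trq p F (ab.2 ^ 2) = c₂ ∧
        Trq p F (ab.1 * ab.2) = c₃)).card : ℕ) : ℂ) = (p : ℂ) ^ (2 * (m : ℤ) - 3 : ℤ) + (p : ℂ) ^ ((m : ℤ) - 3 : ℤ) * ((p : ℂ) - 1) * GaussQ p F - (p : ℂ) ^ ((m : ℤ) - 3 : ℤ) * (2 * (p : ℂ) - 1) + (p : ℂ) ^ (-3 : ℤ) * ((p : ℂ) - 1) * (GaussQ p F) ^ 2) ∧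
    (c₁ ≠ 0 ∧ c₂ ≠ 0 ∧ c₃ = 0 →
      (((univ.filter (fun ab : F × F =>
      Trq p F (ab.1 ^ 2) = c₁ ∧ Trq p F (ab.2 ^ 2) = c₂ ∧
        Trq p F (ab.1 * ab.2) = c₃)).card : ℕ) : ℂ) = (p : ℂ) ^ (2 * (m : ℤ) - 3 : ℤ) - (p : ℂ) ^ ((m : ℤ) - 3 : ℤ) * ((p : ℂ) - 1) - (p : ℂ) ^ ((m : ℤ) - 3 : ℤ) * GaussQ p F + (p : ℂ) ^ (-3 : ℤ) * ((p : ℂ) - 1) * (GaussQ p F) ^ 2 + (p : ℂ) ^ (-2 : ℤ) * etaBar p (-(c₁ * c₂)) * ((p : ℂ) ^ m - GaussQ p F) * GaussQ p F) ∧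
    (c₃ = 0 ∧ ((c₁ = 0 ∧ c₂ ≠ 0) ∨ (c₁ ≠ 0 ∧ c₂ = 0)) →
      (((univ.filter (fun ab : F × F =>
      Trq p F (ab.1 ^ 2) = c₁ ∧ Trq p F (ab.2 ^ 2) = c₂ ∧
        Trq p F (ab.1 * ab.2) = c₃)).card : ℕ) : ℂ) = (p : ℂ) ^ (2 * (m : ℤ) - 3 : ℤ) + (p : ℂ) ^ ((m : ℤ) - 3 : ℤ) * ((p : ℂ) - 1) ^ 2 - (p : ℂ) ^ ((m : ℤ) - 3 : ℤ) * GaussQ p F - (p : ℂ) ^ (-3 : ℤ) * ((p : ℂ) - 1) ^ 2 * (GaussQ p F) ^ 2) ∧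
    (c₃ ≠ 0 ∧ ((c₁ = 0 ∧ c₂ ≠ 0) ∨ (c₁ ≠ 0 ∧ c₂ = 0)) →
      (((univ.filter (fun ab : F × F =>
      Trq p F (ab.1 ^ 2) = c₁ ∧ Trq p F (ab.2 ^ 2) = c₂ ∧
        Trq p F (ab.1 * ab.2) = c₃)).card : ℕ) : ℂ) = (p : ℂ) ^ (2 * (m : ℤ) - 3 : ℤ) + (p : ℂ) ^ ((m : ℤ) - 3 : ℤ) * ((p : ℂ) - 1) * (GaussQ p F - 1) - (p : ℂ) ^ (-3 : ℤ) * (GaussQ p F) ^ 2) ∧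
    ((c₁ ≠ 0 ∧ c₂ ≠ 0 ∧ c₃ ≠ 0) ∧ c₃ ^ 2 - c₁ * c₂ = 0 →
      (((univ.filter (fun ab : F × F =>
      Trq p F (ab.1 ^ 2) = c₁ ∧ Trq p F (ab.2 ^ 2) = c₂ ∧
        Trq p F (ab.1 * ab.2) = c₃)).card : ℕ) : ℂ) = (p : ℂ) ^ (2 * (m : ℤ) - 3 : ℤ) - (p : ℂ) ^ ((m : ℤ) - 3 : ℤ) * (GaussQ p F - 1) - (p : ℂ) ^ (-3 : ℤ) * (GaussQ p F) ^ 2) ∧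
    ((c₁ ≠ 0 ∧ c₂ ≠ 0 ∧ c₃ ≠ 0) ∧ etaBar p (c₃ ^ 2 - c₁ * c₂) = 1 →
      (((univ.filter (fun ab : F × F =>
      Trq p F (ab.1 ^ 2) = c₁ ∧ Trq p F (ab.2 ^ 2) = c₂ ∧
        Trq p F (ab.1 * ab.2) = c₃)).card : ℕ) : ℂ) = (p : ℂ) ^ (2 * (m : ℤ) - 3 : ℤ) - (p : ℂ) ^ ((m : ℤ) - 3 : ℤ) * (2 * GaussQ p F - 1) + (p : ℂ) ^ (-3 : ℤ) * ((p : ℂ) + 1) * ((p : ℂ) ^ m - GaussQ p F) * GaussQ p F) ∧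
    ((c₁ ≠ 0 ∧ c₂ ≠ 0 ∧ c₃ ≠ 0) ∧ etaBar p (c₃ ^ 2 - c₁ * c₂) = -1 →
      (((univ.filter (fun ab : F × F =>
      Trq p F (ab.1 ^ 2) = c₁ ∧ Trq p F (ab.2 ^ 2) = c₂ ∧
        Trq p F (ab.1 * ab.2) = c₃)).card : ℕ) : ℂ) = (p : ℂ) ^ (2 * (m : ℤ) - 3 : ℤ) - (p : ℂ) ^ ((m : ℤ) - 3 : ℤ) * (2 * GaussQ p F - 1) - (p : ℂ) ^ (-3 : ℤ) * ((p : ℂ) - 1) * ((p : ℂ) ^ m - GaussQ p F) * GaussQ p F) := by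
  have h := N3_card_m_even_general F (ZMod.card p) (finrank_eq_of_card_eq_pow hq)
    (ringChar_zmod_ne_two hp) hmeven (ZMod.isPrimitive_stdAddChar p) (quadGaussSum_eq_GaussQ hp F)
    c₁ c₂ c₃
  simp only [etaBar_eq_quadraticChar]
  exact_mod_cast h
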